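/- arXiv:math/9710221 — 5 statements merged into one kernel-verified Lean document; each statement's English description precedes it below -/
import Mathlib

section
/- Let f : ℝ → ℝ be a C^∞ function and let k ∈ ℕ with k ≥ 2. For j ∈ ℕ and α ∈ ℝ define I_j(α) = ∫₀^π f(t+α)·(sin t)^j dt. Then the function I_k is twice differentiable on ℝ and for every α ∈ ℝ one has I_k''(α) + k²·I_k(α) = k·(k−1)·I_{k−2}(α). -/
open Real intervalIntegral

/-!
Integrating by parts against a primitive of `f` and then differentiating in `α` turns the
`α`-derivative of `∫ w(t) f(t+α) dt` into `-∫ w'(t) f(t+α) dt` plus boundary terms, without ever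
differentiating `f`. For `w = sin ^ k` on `[0, π]` with `2 ≤ k`, both `w` and `w'` vanish at the
endpoints, so two such steps replace `w` by `w'' = k (k - 1) sin ^ (k - 2) - k² sin ^ k`.
-/

open MeasureTheory (volume)

section Translation

variable {E : Type*} [NormedAddCommGroup E] [NormedSpace ℝ E] {a b : ℝ} {w w' : ℝ → ℝ} {f : ℝ → E}

theorem hasDerivAt_integral_smul_comp_add_of_hasDerivAt {F : ℝ → E}
    (hw : IntervalIntegrable w volume a b) (hF : ∀ x, HasDerivAt F (f x) x)
    (hf : Continuous f) (α : ℝ) :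
    HasDerivAt (fun β ↦ ∫ t in a..b, w t • F (t + β)) (∫ t in a..b, w t • f (t + α)) α := by
  have hF_cont : Continuous F := continuous_iff_continuousAt.2 fun x ↦ (hF x).continuousAt
  have integrable {g : ℝ → E} (hg : Continuous g) (β : ℝ) :
      IntervalIntegrable (fun t ↦ w t • g (t + β)) volume a b :=
    hw.smul_continuousOn (by fun_prop)
  obtain ⟨C, hC⟩ := ((isCompact_uIcc (a := a) (b := b)).add
    (isCompact_closedBall α 1)).exists_bound_of_continuousOn hf.continuousOn
  have bound : ∀ t ∈ Set.uIoc a b, ∀ β ∈ Metric.ball α 1, ‖w t • f (t + β)‖ ≤ ‖w t‖ * C := by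
    intro t ht β hβ
    rw [norm_smul]
    gcongr
    exact hC _ (Set.add_mem_add (Set.uIoc_subset_uIcc ht) (Metric.ball_subset_closedBall hβ))
  exact (intervalIntegral.hasDerivAt_integral_of_dominated_loc_of_deriv_le
    (Metric.ball_mem_nhds α one_pos)
    (.of_forall fun β ↦ (integrable hF_cont β).aestronglyMeasurable_restrict_uIoc)
    (integrable hF_cont α) (integrable hf α).aestronglyMeasurable_restrict_uIoc
    (.of_forall bound) (hw.norm.mul_const C)
    (.of_forall fun t _ β _ ↦ ((hF (t + β)).comp_const_add t β).const_smul (w t))).2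

variable [CompleteSpace E]

theorem hasDerivAt_integral_smul_comp_add (hw : ∀ t ∈ Set.uIcc a b, HasDerivAt w (w' t) t)
    (hw' : IntervalIntegrable w' volume a b) (hf : Continuous f) (α : ℝ) :
    HasDerivAt (fun β ↦ ∫ t in a..b, w t • f (t + β))
      (w b • f (b + α) - w a • f (a + α) - ∫ t in a..b, w' t • f (t + α)) α := by
  let F : ℝ → E := fun x ↦ ∫ s in (0 : ℝ)..x, f s
  have hF (x : ℝ) : HasDerivAt F (f x) x := (hf.integral_hasStrictDerivAt 0 x).hasDerivAt
  have parts (β : ℝ) : ∫ t in a..b, w t • f (t + β) =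
      w b • F (b + β) - w a • F (a + β) - ∫ t in a..b, w' t • F (t + β) :=
    integral_smul_deriv_eq_deriv_smul hw (fun t _ ↦ (hF (t + β)).comp_add_const t β) hw'
      (Continuous.intervalIntegrable (by fun_prop) a b)
  simp only [parts]
  exact ((((hF (b + α)).comp_const_add b α).const_smul (w b)).sub
    (((hF (a + α)).comp_const_add a α).const_smul (w a))).sub
    (hasDerivAt_integral_smul_comp_add_of_hasDerivAt hw' hF hf α)

theorem hasDerivAt_integral_smul_comp_add_of_eq_zero
    (hw : ∀ t ∈ Set.uIcc a b, HasDerivAt w (w' t) t)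
    (hw' : IntervalIntegrable w' volume a b) (ha : w a = 0) (hb : w b = 0)
    (hf : Continuous f) (α : ℝ) :
    HasDerivAt (fun β ↦ ∫ t in a..b, w t • f (t + β)) (-∫ t in a..b, w' t • f (t + α)) α := by
  simpa only [ha, hb, zero_smul, sub_zero, zero_sub] using
    hasDerivAt_integral_smul_comp_add hw hw' hf α

end Translation

section SinPow

theorem hasDerivAt_sin_pow (k : ℕ) (t : ℝ) :
    HasDerivAt (fun s ↦ sin s ^ k) (k * sin t ^ (k - 1) * cos t) t :=
  (hasDerivAt_sin t).fun_pow k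

theorem hasDerivAt_mul_sin_pow_mul_cos (k : ℕ) (t : ℝ) :
    HasDerivAt (fun s ↦ k * sin s ^ (k - 1) * cos s)
      (k * (k - 1) * sin t ^ (k - 2) - k ^ 2 * sin t ^ k) t := by
  refine (((hasDerivAt_sin_pow (k - 1) t).const_mul (k : ℝ)).mul (hasDerivAt_cos t)).congr_deriv ?_
  match k with
  | 0 => simp
  | 1 => simp
  | m + 2 =>
    simp only [Nat.add_sub_cancel, Nat.add_succ_sub_one]
    push_cast
    linear_combination ((m + 2) * (m + 1) * sin t ^ m : ℝ) * cos_sq' t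

variable {E : Type*} [NormedAddCommGroup E] [NormedSpace ℝ E] [CompleteSpace E] {f : ℝ → E} {k : ℕ}

theorem hasDerivAt_integral_sin_pow_smul_comp_add (hf : Continuous f) (hk : k ≠ 0) (α : ℝ) :
    HasDerivAt (fun β ↦ ∫ t in (0 : ℝ)..π, sin t ^ k • f (t + β))
      (-∫ t in (0 : ℝ)..π, (k * sin t ^ (k - 1) * cos t) • f (t + α)) α :=
  hasDerivAt_integral_smul_comp_add_of_eq_zero (fun t _ ↦ hasDerivAt_sin_pow k t)
    (Continuous.intervalIntegrable (by fun_prop) 0 π) (by simp [hk]) (by simp [hk]) hf α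

theorem hasDerivAt_integral_mul_sin_pow_mul_cos_smul_comp_add (hf : Continuous f) (hk : 2 ≤ k)
    (α : ℝ) :
    HasDerivAt (fun β ↦ ∫ t in (0 : ℝ)..π, (k * sin t ^ (k - 1) * cos t) • f (t + β))
      (-∫ t in (0 : ℝ)..π, (k * (k - 1) * sin t ^ (k - 2) - k ^ 2 * sin t ^ k) • f (t + α)) α := by
  have hk' : k - 1 ≠ 0 := by lia
  exact hasDerivAt_integral_smul_comp_add_of_eq_zero
    (fun t _ ↦ hasDerivAt_mul_sin_pow_mul_cos k t)
    (Continuous.intervalIntegrable (by fun_prop) 0 π) (by simp [hk']) (by simp [hk']) hf α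

theorem recursion_for_weighted_integrals_general (hf : Continuous f) (hk : 2 ≤ k) {I : ℕ → ℝ → E}
    (hI : ∀ j α, I j α = ∫ t in (0 : ℝ)..π, sin t ^ j • f (t + α)) :
    Differentiable ℝ (I k) ∧ Differentiable ℝ (deriv (I k)) ∧
      ∀ α : ℝ, deriv (deriv (I k)) α + (k : ℝ) ^ 2 • I k α
        = ((k : ℝ) * ((k : ℝ) - 1)) • I (k - 2) α := by
  have h_first := hasDerivAt_integral_sin_pow_smul_comp_add hf (show k ≠ 0 by lia)
  have h_second (α : ℝ) := (hasDerivAt_integral_mul_sin_pow_mul_cos_smul_comp_add hf hk α).fun_neg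
  simp only [← hI] at h_first
  rw [← funext fun α ↦ (h_first α).deriv] at h_second
  refine ⟨fun α ↦ (h_first α).differentiableAt, fun α ↦ (h_second α).differentiableAt, fun α ↦ ?_⟩
  have integrable (c : ℝ) (j : ℕ) :
      IntervalIntegrable (fun t ↦ c • sin t ^ j • f (t + α)) volume 0 π :=
    Continuous.intervalIntegrable (by fun_prop) 0 π
  rw [(h_second α).deriv, neg_neg, hI, hI]
  simp only [sub_smul, mul_smul _ (sin _ ^ _)]
  rw [integral_sub (integrable _ _) (integrable _ _), integral_smul, integral_smul, sub_add_cancel]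

end SinPow

/-- Recursion relation `I_k'' + k² I_k = k(k-1) I_{k-2}` for the shifted weighted
integrals `I_j(α) = ∫₀^π f(t+α) (sin t)^j dt` of a smooth function `f`. -/
theorem recursion_for_weighted_integrals
    (f : ℝ → ℝ) (hf : ContDiff ℝ (⊤ : ℕ∞) f) (k : ℕ) (hk : 2 ≤ k)
    (I : ℕ → ℝ → ℝ)
    (hI : ∀ j α, I j α = ∫ t in (0:ℝ)..π, f (t + α) * Real.sin t ^ j) :
    Differentiable ℝ (I k) ∧ Differentiable ℝ (deriv (I k)) ∧
      ∀ α : ℝ, deriv (deriv (I k)) α + (k : ℝ) ^ 2 * I k α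
        = (k : ℝ) * ((k : ℝ) - 1) * I (k - 2) α :=
  recursion_for_weighted_integrals_general hf.continuous hk fun j α ↦ by
    simp only [hI, smul_eq_mul, mul_comm]
end

section
/- Let f : ℝ → ℝ be a C^∞ function and let k ∈ ℕ with k ≥ 1. If ∫₀^π f(t+α)·(sin t)^k dt = 0 for every α ∈ ℝ, then ∫₀^π f(t+α)·(sin t)^{k−1}·(cos t) dt = 0 for every α ∈ ℝ. -/
open Real intervalIntegral

/-!
In `∫ t in a..b, w t • f (t + α)` the substitution `s = t + α` moves the parameter from `f` to the
weight. A Lipschitz weight vanishing at `a` and `b` stays Lipschitz when extended by zero, so one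
may differentiate under the integral sign: the derivative falls on the weight alone, and `f` need
only be locally integrable. For `w = sin ^ k` the derivative of the weight is
`k * sin ^ (k - 1) * cos`.
-/

section

open Set MeasureTheory Metric
open scoped NNReal

theorem lipschitzWith_indicator_Icc {F : Type*} [PseudoEMetricSpace F] [Zero F] {w : ℝ → F}
    {a b : ℝ} {K : ℝ≥0} (hw : LipschitzOnWith K w (Icc a b)) (ha : w a = 0) (hb : w b = 0) :
    LipschitzWith K ((Icc a b).indicator w) := by
  rcases lt_or_ge b a with hba | hab
  · simpa [Icc_eq_empty hba.not_ge] using LipschitzWith.const' (0 : F)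
  have h_eq : (Icc a b).indicator w = IccExtend hab ((Icc a b).domRestrict w) := by
    ext x
    rcases lt_or_ge x a with hx | hax
    · simp [IccExtend_of_le_left hab _ hx.le, ha, hx.not_ge]
    rcases lt_or_ge b x with hx | hxb
    · simp [IccExtend_of_right_le hab _ hx.le, hb, hx.not_ge]
    · simp [IccExtend_of_mem hab _ ⟨hax, hxb⟩, hax, hxb]
  rw [h_eq, ← mul_one K]
  exact hw.to_restrict.comp (LipschitzWith.projIcc hab)

variable {E : Type*} [NormedAddCommGroup E] [NormedSpace ℝ E] {f : ℝ → E} {w : ℝ → ℝ} {a b : ℝ}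
  {K : ℝ≥0}

theorem lipschitzOnWith_comp_sub_smul (hw : LipschitzWith K w) {R : ℝ}
    (hR : tsupport w ⊆ closedBall 0 R) (α r s : ℝ) :
    LipschitzOnWith (Real.nnabs ((closedBall α (R + r)).indicator (fun s => K * ‖f s‖) s))
      (fun x => w (s - x) • f s) (ball α r) := by
  refine LipschitzOnWith.of_dist_le_mul fun x hx y hy => ?_
  by_cases hs : s ∈ closedBall α (R + r)
  · have h_dist : dist (w (s - x)) (w (s - y)) ≤ K * dist x y := by
      simpa only [dist_sub_left] using hw.dist_le_mul (s - x) (s - y)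
    rw [indicator_of_mem hs, Real.coe_nnabs, abs_of_nonneg (by positivity), dist_eq_norm,
      ← sub_smul, norm_smul, ← dist_eq_norm, mul_right_comm]
    gcongr
  · have h_zero (z : ℝ) (hz : z ∈ ball α r) : w (s - z) = 0 := by
      refine image_eq_zero_of_notMem_tsupport fun h => hs ?_
      have h_sz : dist s z ≤ R := by simpa [dist_eq_norm] using hR h
      exact (dist_triangle s z α).trans (add_le_add h_sz (mem_ball.mp hz).le)
    simp [h_zero x hx, h_zero y hy, hs]

theorem hasDerivAt_integral_smul_comp_add_s1 (hw : LipschitzWith K w) (hws : HasCompactSupport w)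
    (hf : LocallyIntegrable f) (α : ℝ) :
    HasDerivAt (fun α => ∫ t, w t • f (t + α)) (-∫ t, deriv w t • f (t + α)) α := by
  have h_subst (v : ℝ → ℝ) (x : ℝ) : ∫ t, v t • f (t + x) = ∫ s, v (s - x) • f s := by
    simpa using (integral_sub_right_eq_self (fun t => v t • f (t + x)) x).symm
  simp only [h_subst, ← MeasureTheory.integral_neg, ← neg_smul]
  obtain ⟨R, hR⟩ := hws.isCompact.isBounded.subset_closedBall 0
  have h_cont (x : ℝ) : Continuous fun s => w (s - x) :=
    hw.continuous.comp (continuous_sub_right x)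
  have h_diff : ∀ᵐ s, DifferentiableAt ℝ w (s - α) :=
    (measurePreserving_sub_right volume α).quasiMeasurePreserving.ae hw.ae_differentiableAt_real
  refine (hasDerivAt_integral_of_dominated_loc_of_lip (F := fun x s => w (s - x) • f s)
    (F' := fun s => -deriv w (s - α) • f s)
    (bound := (closedBall α (R + 1)).indicator fun s => K * ‖f s‖) (ball_mem_nhds α one_pos)
    (.of_forall fun x => (h_cont x).aestronglyMeasurable.smul hf.aestronglyMeasurable)
    (hf.integrable_smul_left_of_hasCompactSupport (h_cont α)
      (hws.comp_homeomorph (Homeomorph.subRight α)))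
    ?_ (.of_forall (lipschitzOnWith_comp_sub_smul hw hR α 1)) ?_ ?_).2
  · exact ((stronglyMeasurable_deriv w).comp_measurable
      (measurable_sub_const α)).neg.aestronglyMeasurable.smul hf.aestronglyMeasurable
  · exact (integrable_indicator_iff isClosed_closedBall.measurableSet).mpr
      ((hf.integrableOn_isCompact (isCompact_closedBall α (R + 1))).norm.const_mul _)
  · filter_upwards [h_diff] with s hs
    exact (hs.hasDerivAt.comp_const_sub s α).smul_const (f s)

theorem hasDerivAt_intervalIntegral_smul_comp_add (hab : a ≤ b)
    (hw : LipschitzOnWith K w (Icc a b)) (ha : w a = 0) (hb : w b = 0)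
    (hf : LocallyIntegrable f) (α : ℝ) :
    HasDerivAt (fun α => ∫ t in a..b, w t • f (t + α))
      (-∫ t in a..b, deriv w t • f (t + α)) α := by
  let v := (Icc a b).indicator w
  have hv_lip : LipschitzWith K v := lipschitzWith_indicator_Icc hw ha hb
  have hv_tsupport : tsupport v ⊆ Icc a b :=
    closure_minimal support_indicator_subset isClosed_Icc
  have hv_compact : HasCompactSupport v :=
    isCompact_Icc.of_isClosed_subset (isClosed_tsupport v) hv_tsupport
  have h_integral (x : ℝ) : ∫ t, v t • f (t + x) = ∫ t in a..b, w t • f (t + x) := by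
    rw [integral_of_le hab, ← integral_Icc_eq_integral_Ioc,
      ← MeasureTheory.integral_indicator measurableSet_Icc]
    simp only [v, indicator_smul_apply_left]
  have h_deriv_inside : ∀ t ∈ Ioo a b, deriv v t = deriv w t := fun t ht =>
    (eqOn_indicator.eventuallyEq_of_mem (Icc_mem_nhds ht.1 ht.2)).deriv_eq
  have h_deriv_outside : ∀ t ∉ Icc a b, deriv v t = 0 := fun t ht =>
    Function.notMem_support.mp fun h => ht (hv_tsupport (support_deriv_subset h))
  have h_integral_deriv :
      ∫ t, deriv v t • f (t + α) = ∫ t in a..b, deriv w t • f (t + α) := calc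
    _ = ∫ t in Icc a b, deriv v t • f (t + α) :=
      (setIntegral_eq_integral_of_forall_compl_eq_zero fun t ht => by
        rw [h_deriv_outside t ht, zero_smul]).symm
    _ = ∫ t in Ioo a b, deriv v t • f (t + α) := integral_Icc_eq_integral_Ioo
    _ = ∫ t in Ioo a b, deriv w t • f (t + α) :=
      setIntegral_congr_fun measurableSet_Ioo fun t ht => by simp only [h_deriv_inside t ht]
    _ = ∫ t in a..b, deriv w t • f (t + α) := by
      rw [integral_of_le hab, integral_Ioc_eq_integral_Ioo]
  simpa only [h_integral, h_integral_deriv] using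
    hasDerivAt_integral_smul_comp_add_s1 hv_lip hv_compact hf α

theorem intervalIntegral_deriv_smul_comp_add_eq_zero (hab : a ≤ b)
    (hw : LipschitzOnWith K w (Icc a b)) (ha : w a = 0) (hb : w b = 0)
    (hf : LocallyIntegrable f) (h : ∀ α, ∫ t in a..b, w t • f (t + α) = 0) (α : ℝ) :
    ∫ t in a..b, deriv w t • f (t + α) = 0 := by
  have h_deriv := hasDerivAt_intervalIntegral_smul_comp_add hab hw ha hb hf α
  simp only [h] at h_deriv
  exact neg_eq_zero.mp (h_deriv.unique (hasDerivAt_const α 0))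

theorem deriv_of_weighted_integral_vanishes_general (hf : LocallyIntegrable f) {k : ℕ}
    (hk : 1 ≤ k) (h : ∀ α, ∫ t in 0..π, sin t ^ k • f (t + α) = 0) (α : ℝ) :
    ∫ t in 0..π, (sin t ^ (k - 1) * cos t) • f (t + α) = 0 := by
  have hk₀ : k ≠ 0 := Nat.one_le_iff_ne_zero.mp hk
  obtain ⟨K, hK⟩ : ∃ K, LipschitzOnWith K (fun t => sin t ^ k) (Icc 0 π) :=
    (contDiff_sin.pow k).locallyLipschitz.locallyLipschitzOn.exists_lipschitzOnWith_of_compact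
      isCompact_Icc
  have h_deriv (t : ℝ) : deriv (fun t => sin t ^ k) t = k * (sin t ^ (k - 1) * cos t) := by
    rw [((hasDerivAt_sin t).fun_pow k).deriv, mul_assoc]
  have h_zero := intervalIntegral_deriv_smul_comp_add_eq_zero pi_pos.le hK (by simp [hk₀])
    (by simp [hk₀]) hf h α
  simp only [h_deriv, mul_smul (k : ℝ), intervalIntegral.integral_smul] at h_zero
  exact (smul_eq_zero.mp h_zero).resolve_left (Nat.cast_ne_zero.mpr hk₀)

end

/-- If all the shifted integrals `∫₀^π f(t+α)(sin t)^k dt` of a smooth function vanish,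
then so do the shifted integrals `∫₀^π f(t+α)(sin t)^{k-1}(cos t) dt`. -/
theorem deriv_of_weighted_integral_vanishes
    (f : ℝ → ℝ) (hf : ContDiff ℝ (⊤ : ℕ∞) f) (k : ℕ) (hk : 1 ≤ k)
    (h : ∀ α : ℝ, ∫ t in (0:ℝ)..π, f (t + α) * Real.sin t ^ k = 0) :
    ∀ α : ℝ, ∫ t in (0:ℝ)..π, f (t + α) * Real.sin t ^ (k - 1) * Real.cos t = 0 := by
  simpa only [smul_eq_mul, mul_comm, mul_left_comm] using
    deriv_of_weighted_integral_vanishes_general hf.continuous.locallyIntegrable hk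
      (by simpa only [smul_eq_mul, mul_comm] using h)
end

section
/- Let f : ℝ → ℝ be a C^∞ function. If ∫₀^π f(t+α)·(sin t) dt = 0 for every α ∈ ℝ, then f(α+π) = −f(α) for every α ∈ ℝ. -/
open Real intervalIntegral

/-!
Write `I α = ∫₀^π sin t • f (t + α) dt`. Integrating by parts twice moves the two derivatives in
`α` from `f` to the sine, so that `I + I'' = f (· + π) + f`, the right-hand side being the boundary
terms of the second integration by parts. Hence `I = 0` forces `f (α + π) = -f α`. Each derivative
is taken under the integral sign after integrating by parts against a primitive of `f`, so that `f`
itself is never differentiated.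
-/

section LeibnizRule

variable {𝕜 E : Type*} [RCLike 𝕜] [NormedAddCommGroup E] [NormedSpace ℝ E] [NormedSpace 𝕜 E]

theorem hasDerivAt_intervalIntegral_of_continuous_deriv {μ : MeasureTheory.Measure ℝ}
    [MeasureTheory.IsLocallyFiniteMeasure μ] {F F' : 𝕜 → ℝ → E} (a b : ℝ) (x₀ : 𝕜)
    (hF : ∀ x, Continuous (F x)) (hF' : Continuous (Function.uncurry F'))
    (hFF' : ∀ x t, HasDerivAt (F · t) (F' x t) x) :
    HasDerivAt (fun x ↦ ∫ t in a..b, F x t ∂μ) (∫ t in a..b, F' x₀ t ∂μ) x₀ := by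
  obtain ⟨C, hC⟩ := ((isCompact_closedBall x₀ 1).prod isCompact_uIcc).exists_bound_of_continuousOn
    (hF'.continuousOn (s := Metric.closedBall x₀ 1 ×ˢ Set.uIcc a b))
  have hbound : ∀ t ∈ Set.uIoc a b, ∀ x ∈ Metric.closedBall x₀ 1, ‖F' x t‖ ≤ C := fun t ht x hx ↦
    hC (x, t) ⟨hx, Set.uIoc_subset_uIcc ht⟩
  exact (hasDerivAt_integral_of_dominated_loc_of_deriv_le
    (Metric.closedBall_mem_nhds x₀ one_pos)
    (.of_forall fun x ↦ (hF x).aestronglyMeasurable) ((hF x₀).intervalIntegrable a b)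
    (hF'.uncurry_left x₀).aestronglyMeasurable (.of_forall hbound) intervalIntegrable_const
    (.of_forall fun t _ x _ ↦ hFF' x t)).2

end LeibnizRule

section ShiftedIntegrals

variable {E : Type*} [NormedAddCommGroup E] [NormedSpace ℝ E] [CompleteSpace E] {f : ℝ → E}

theorem hasDerivAt_integral_smul_comp_add_s3 {φ φ' : ℝ → ℝ} (hφ : ∀ t, HasDerivAt φ (φ' t) t)
    (hφ' : Continuous φ') (hf : Continuous f) (a b x₀ : ℝ) :
    HasDerivAt (fun x ↦ ∫ t in a..b, φ t • f (t + x))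
      (φ b • f (b + x₀) - φ a • f (a + x₀) - ∫ t in a..b, φ' t • f (t + x₀)) x₀ := by
  set F : ℝ → E := fun y ↦ ∫ s in (0 : ℝ)..y, f s
  have hF (y : ℝ) : HasDerivAt F (f y) y := hf.integral_hasStrictDerivAt 0 y |>.hasDerivAt
  have hFc : Continuous F := continuous_iff_continuousAt.2 fun y ↦ (hF y).continuousAt
  have by_parts (x : ℝ) : ∫ t in a..b, φ t • f (t + x) =
      φ b • F (b + x) - φ a • F (a + x) - ∫ t in a..b, φ' t • F (t + x) :=
    integral_smul_deriv_eq_deriv_smul (fun t _ ↦ hφ t) (fun t _ ↦ (hF _).comp_add_const t x)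
      (hφ'.intervalIntegrable a b) (Continuous.intervalIntegrable (by fun_prop) a b)
  have hF_shift (t x : ℝ) : HasDerivAt (fun y ↦ F (t + y)) (f (t + x)) x :=
    (hF _).comp_const_add t x
  simp only [by_parts]
  exact (((hF_shift b x₀).const_smul (φ b)).sub ((hF_shift a x₀).const_smul (φ a))).sub <|
    hasDerivAt_intervalIntegral_of_continuous_deriv a b x₀ (fun _ ↦ by fun_prop) (by fun_prop)
      fun x t ↦ (hF_shift t x).const_smul (φ' t)

theorem hasDerivAt_integral_sin_smul_comp_add (hf : Continuous f) (x : ℝ) :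
    HasDerivAt (fun x ↦ ∫ t in 0..π, sin t • f (t + x)) (-∫ t in 0..π, cos t • f (t + x)) x := by
  simpa using hasDerivAt_integral_smul_comp_add_s3 hasDerivAt_sin continuous_cos hf 0 π x

theorem hasDerivAt_integral_cos_smul_comp_add (hf : Continuous f) (x : ℝ) :
    HasDerivAt (fun x ↦ ∫ t in 0..π, cos t • f (t + x))
      ((∫ t in 0..π, sin t • f (t + x)) - (f (x + π) + f x)) x := by
  have h := hasDerivAt_integral_smul_comp_add_s3 hasDerivAt_cos continuous_sin.neg hf 0 π x
  simp only [cos_pi, cos_zero, neg_smul, one_smul, zero_add, integral_neg] at h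
  convert h using 1
  rw [add_comm π x]
  abel

theorem hasDerivAt_deriv_integral_sin_smul_comp_add (hf : Continuous f) (x : ℝ) :
    HasDerivAt (deriv fun x ↦ ∫ t in 0..π, sin t • f (t + x))
      (f (x + π) + f x - ∫ t in 0..π, sin t • f (t + x)) x := by
  have deriv_eq : deriv (fun x ↦ ∫ t in 0..π, sin t • f (t + x)) =
      -fun x ↦ ∫ t in 0..π, cos t • f (t + x) :=
    funext fun y ↦ (hasDerivAt_integral_sin_smul_comp_add hf y).deriv
  rw [deriv_eq, ← neg_sub]
  exact (hasDerivAt_integral_cos_smul_comp_add hf x).neg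

theorem antiperiodic_of_shifted_sin_integrals_vanish_general (hf : Continuous f)
    (h : ∀ α, ∫ t in 0..π, sin t • f (t + α) = 0) : Function.Antiperiodic f π := by
  intro α
  have hderiv := hasDerivAt_deriv_integral_sin_smul_comp_add hf α
  simp only [h, deriv_const', sub_zero] at hderiv
  exact eq_neg_of_add_eq_zero_left (hderiv.unique (hasDerivAt_const α 0))

end ShiftedIntegrals

/-- If all the shifted integrals `∫₀^π f(t+α) sin t dt` of a smooth function vanish,
then `f` is odd under translation by `π`. -/
theorem antiperiodic_of_shifted_sin_integrals_vanish
    (f : ℝ → ℝ) (hf : ContDiff ℝ (⊤ : ℕ∞) f)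
    (h : ∀ α : ℝ, ∫ t in (0:ℝ)..π, f (t + α) * Real.sin t = 0) :
    ∀ α : ℝ, f (α + π) = -f α :=
  antiperiodic_of_shifted_sin_integrals_vanish_general hf.continuous fun α ↦ by
    simpa only [smul_eq_mul, mul_comm] using h α
end

section
/- Let n ∈ ℕ with n ≥ 2, let k ∈ ℕ, and let F be a smooth symmetric 2-cotensor field on ℝ^n. Suppose that for every unit-speed great circle γ on the unit sphere S^{n−1} ⊂ ℝ^n one has ∫₀^π F(γ(t))(γ'(t), γ'(t))·(sin t)^k dt = 0. Then for every x ∈ ℝ^n with ‖x‖ = 1 and every V ∈ ℝ^n with ⟨x, V⟩ = 0, one has F(−x)(V, V) = (−1)^k·F(x)(V, V). -/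
open Real intervalIntegral
open scoped RealInnerProductSpace

/-!
Restrict `F(γ, γ')` to a great circle `γ` to get a function `f` on the line. Moving the base point
of `γ` turns the hypothesis into `∫₀^π sin(t)^k f(s + t) dt = 0` for every `s`. Differentiating such
an identity in `s` and integrating by parts moves the derivative from the merely continuous `f` onto
the weight, at the cost of boundary terms. Two differentiations reduce `k + 2` to `k`, and for
`k = 0, 1` the boundary terms are `±(f(s + π) - (-1)^k f(s))`.
-/

open MeasureTheory Metric Set

section TranslatedIntegrals

variable {G : Type*} [NormedAddCommGroup G] [NormedSpace ℝ G]
  {K K' : ℝ → ℝ} {f f' : ℝ → G} {a b : ℝ}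

lemma hasDerivAt_integral_smul_comp_add_s5 (hK : IntervalIntegrable K volume a b)
    (hf : ∀ t, HasDerivAt f (f' t) t) (hf' : Continuous f') (s : ℝ) :
    HasDerivAt (fun s => ∫ t in a..b, K t • f (s + t)) (∫ t in a..b, K t • f' (s + t)) s := by
  have f_continuous : Continuous f := continuous_iff_continuousAt.2 fun t => (hf t).continuousAt
  have integrable_smul {g : ℝ → G} (hg : Continuous g) (r : ℝ) :
      IntervalIntegrable (fun t => K t • g (r + t)) volume a b :=
    hK.smul_continuousOn (by fun_prop : Continuous fun t => g (r + t)).continuousOn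
  obtain ⟨C, hC⟩ := ((isCompact_closedBall s 1).prod (isCompact_uIcc (a := a) (b := b)))
    |>.exists_bound_of_continuousOn
      (by fun_prop : Continuous fun p : ℝ × ℝ => f' (p.1 + p.2)).continuousOn
  refine (intervalIntegral.hasDerivAt_integral_of_dominated_loc_of_deriv_le
    (F' := fun r t => K t • f' (r + t)) (bound := fun t => ‖K t‖ * C)
    (closedBall_mem_nhds s one_pos)
    (.of_forall fun r => (integrable_smul f_continuous r).aestronglyMeasurable_restrict_uIoc)
    (integrable_smul f_continuous s) (integrable_smul hf' s).aestronglyMeasurable_restrict_uIoc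
    (.of_forall fun t ht r hr => ?_) (hK.norm.mul_const C)
    (.of_forall fun t _ r _ => ((hf (r + t)).comp_add_const r t).const_smul (K t))).2
  rw [norm_smul]
  gcongr
  exact hC (r, t) ⟨hr, uIoc_subset_uIcc ht⟩

variable [CompleteSpace G]

lemma hasDerivAt_integral_smul_comp_add_of_continuous
    (hK : ∀ t ∈ uIcc a b, HasDerivAt K (K' t) t) (hK' : IntervalIntegrable K' volume a b)
    (hf : Continuous f) (s : ℝ) :
    HasDerivAt (fun s => ∫ t in a..b, K t • f (s + t))
      (K b • f (s + b) - K a • f (s + a) - ∫ t in a..b, K' t • f (s + t)) s := by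
  let P : ℝ → G := fun x => ∫ t in (0 : ℝ)..x, f t
  have hP (x : ℝ) : HasDerivAt P (f x) x := hf.integral_hasStrictDerivAt 0 x |>.hasDerivAt
  have by_parts (r : ℝ) : ∫ t in a..b, K t • f (r + t) =
      K b • P (r + b) - K a • P (r + a) - ∫ t in a..b, K' t • P (r + t) :=
    integral_smul_deriv_eq_deriv_smul hK (fun t _ => (hP (r + t)).comp_const_add r t) hK'
      ((by fun_prop : Continuous fun t => f (r + t)).intervalIntegrable a b)
  simp only [by_parts]
  exact ((((hP (s + b)).comp_add_const s b).const_smul (K b)).sub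
    (((hP (s + a)).comp_add_const s a).const_smul (K a))).sub
      (hasDerivAt_integral_smul_comp_add_s5 hK' hP hf s)

lemma integral_deriv_smul_comp_add_of_integral_eq_zero
    (hK : ∀ t ∈ uIcc a b, HasDerivAt K (K' t) t) (hK' : IntervalIntegrable K' volume a b)
    (hf : Continuous f) (h : ∀ s, ∫ t in a..b, K t • f (s + t) = 0) (s : ℝ) :
    ∫ t in a..b, K' t • f (s + t) = K b • f (s + b) - K a • f (s + a) := by
  have hderiv := hasDerivAt_integral_smul_comp_add_of_continuous hK hK' hf s
  simp only [h] at hderiv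
  exact (sub_eq_zero.1 (hderiv.unique (hasDerivAt_const s 0))).symm

end TranslatedIntegrals

section SinePowerWeights

variable {G : Type*} [NormedAddCommGroup G] [NormedSpace ℝ G] [CompleteSpace G] {f : ℝ → G}

lemma hasDerivAt_sin_pow_succ (k : ℕ) (t : ℝ) :
    HasDerivAt (fun t => sin t ^ (k + 1)) ((k + 1) * (sin t ^ k * cos t)) t := by
  simpa [mul_assoc] using (hasDerivAt_sin t).fun_pow (k + 1)

lemma hasDerivAt_sin_pow_succ_mul_cos (k : ℕ) (t : ℝ) :
    HasDerivAt (fun t => sin t ^ (k + 1) * cos t)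
      ((k + 1) * sin t ^ k - (k + 2) * sin t ^ (k + 2)) t := by
  refine ((hasDerivAt_sin_pow_succ k t).fun_mul (hasDerivAt_cos t)).congr_deriv ?_
  linear_combination (k + 1) * sin t ^ k * cos_sq' t

lemma integral_sin_pow_mul_cos_smul_eq_zero (hf : Continuous f) (k : ℕ)
    (h : ∀ s, ∫ t in (0 : ℝ)..π, sin t ^ (k + 1) • f (s + t) = 0) (s : ℝ) :
    ∫ t in (0 : ℝ)..π, (sin t ^ k * cos t) • f (s + t) = 0 := by
  have boundary_identity := integral_deriv_smul_comp_add_of_integral_eq_zero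
    (fun t _ => hasDerivAt_sin_pow_succ k t)
    ((by fun_prop : Continuous _).intervalIntegrable 0 π) hf h s
  simp only [mul_smul ((k : ℝ) + 1), intervalIntegral.integral_smul, sin_pi, sin_zero,
    zero_pow k.succ_ne_zero, zero_smul, sub_zero] at boundary_identity
  exact (smul_eq_zero.1 boundary_identity).resolve_left (by positivity)

lemma integral_sin_pow_smul_eq_zero_of_add_two (hf : Continuous f) (k : ℕ)
    (h : ∀ s, ∫ t in (0 : ℝ)..π, sin t ^ (k + 2) • f (s + t) = 0) (s : ℝ) :
    ∫ t in (0 : ℝ)..π, sin t ^ k • f (s + t) = 0 := by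
  have boundary_identity := integral_deriv_smul_comp_add_of_integral_eq_zero
    (fun t _ => hasDerivAt_sin_pow_succ_mul_cos k t)
    ((by fun_prop : Continuous _).intervalIntegrable 0 π) hf
    (integral_sin_pow_mul_cos_smul_eq_zero hf (k + 1) h) s
  simp only [sub_smul, mul_smul ((k : ℝ) + 1), mul_smul ((k : ℝ) + 2)] at boundary_identity
  rw [intervalIntegral.integral_sub ((by fun_prop : Continuous _).intervalIntegrable 0 π)
    ((by fun_prop : Continuous _).intervalIntegrable 0 π)] at boundary_identity
  simp only [intervalIntegral.integral_smul, h, sin_pi, sin_zero, zero_pow k.succ_ne_zero,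
    zero_mul, zero_smul, smul_zero, sub_zero] at boundary_identity
  exact (smul_eq_zero.1 boundary_identity).resolve_left (by positivity)

lemma comp_add_pi_eq_of_integral_eq_zero (hf : Continuous f)
    (h : ∀ s, ∫ t in (0 : ℝ)..π, f (s + t) = 0) (s : ℝ) : f (s + π) = f s := by
  have boundary_identity := integral_deriv_smul_comp_add_of_integral_eq_zero
    (fun t _ => hasDerivAt_const t (1 : ℝ)) (intervalIntegrable_const (a := 0) (b := π)) hf
    (by simpa only [one_smul] using h) s
  simp only [zero_smul, intervalIntegral.integral_zero, one_smul, add_zero] at boundary_identity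
  exact sub_eq_zero.1 boundary_identity.symm

lemma comp_add_pi_eq_neg_of_integral_sin_smul_eq_zero (hf : Continuous f)
    (h : ∀ s, ∫ t in (0 : ℝ)..π, sin t • f (s + t) = 0) (s : ℝ) : f (s + π) = -f s := by
  have hcos (s : ℝ) : ∫ t in (0 : ℝ)..π, cos t • f (s + t) = 0 := by
    simpa using integral_sin_pow_mul_cos_smul_eq_zero hf 0 (by simpa using h) s
  have boundary_identity := integral_deriv_smul_comp_add_of_integral_eq_zero
    (fun t _ => hasDerivAt_cos t)
    ((by fun_prop : Continuous _).intervalIntegrable 0 π) hf hcos s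
  simp only [neg_smul, intervalIntegral.integral_neg, h, cos_pi, cos_zero, one_smul, add_zero,
    neg_zero] at boundary_identity
  rw [eq_neg_iff_add_eq_zero, ← neg_eq_zero, neg_add', ← boundary_identity]

theorem comp_add_pi_eq_of_integral_sin_pow_smul_eq_zero (hf : Continuous f) (k : ℕ)
    (h : ∀ s, ∫ t in (0 : ℝ)..π, sin t ^ k • f (s + t) = 0) (s : ℝ) :
    f (s + π) = (-1 : ℝ) ^ k • f s := by
  induction k using Nat.twoStepInduction with
  | zero => simpa using comp_add_pi_eq_of_integral_eq_zero hf (by simpa using h) s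
  | one => simpa using comp_add_pi_eq_neg_of_integral_sin_smul_eq_zero hf (by simpa using h) s
  | more k ih _ =>
    simpa [pow_add] using ih (integral_sin_pow_smul_eq_zero_of_add_two hf k h)

end SinePowerWeights

section GreatCircles

variable {E : Type*}

/-- The great circle with initial point `u` and initial velocity `v`; it lies on the unit sphere
when `(u, v)` is an orthonormal pair. -/
noncomputable def greatCircle [AddCommGroup E] [Module ℝ E] (u v : E) (t : ℝ) : E :=
  cos t • u + sin t • v

/-- The velocity of `greatCircle u v`, given by its explicit formula so that no
differentiability is involved. -/
noncomputable def greatCircleVelocity [AddCommGroup E] [Module ℝ E] (u v : E) (t : ℝ) : E :=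
  -sin t • u + cos t • v

lemma greatCircle_rebase [AddCommGroup E] [Module ℝ E] (u v : E) (s t : ℝ) :
    greatCircle (greatCircle u v s) (greatCircleVelocity u v s) t = greatCircle u v (s + t) := by
  simp only [greatCircle, greatCircleVelocity, cos_add, sin_add]
  module

lemma greatCircleVelocity_rebase [AddCommGroup E] [Module ℝ E] (u v : E) (s t : ℝ) :
    greatCircleVelocity (greatCircle u v s) (greatCircleVelocity u v s) t =
      greatCircleVelocity u v (s + t) := by
  simp only [greatCircle, greatCircleVelocity, cos_add, sin_add]
  module

variable [NormedAddCommGroup E] [InnerProductSpace ℝ E] {u v : E}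

lemma inner_smul_add_smul_of_orthonormal (hu : ‖u‖ = 1) (hv : ‖v‖ = 1) (huv : ⟪u, v⟫ = 0)
    (a b c d : ℝ) : ⟪a • u + b • v, c • u + d • v⟫ = a * c + b * d := by
  simp only [inner_add_left, inner_add_right, real_inner_smul_left, real_inner_smul_right,
    inner_self_eq_one_of_norm_eq_one hu, inner_self_eq_one_of_norm_eq_one hv, huv,
    real_inner_comm u v]
  ring

lemma norm_smul_add_smul_of_orthonormal (hu : ‖u‖ = 1) (hv : ‖v‖ = 1) (huv : ⟪u, v⟫ = 0)
    (a b : ℝ) : ‖a • u + b • v‖ = √(a ^ 2 + b ^ 2) := by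
  rw [norm_eq_sqrt_real_inner, inner_smul_add_smul_of_orthonormal hu hv huv, sq, sq]

lemma norm_greatCircle (hu : ‖u‖ = 1) (hv : ‖v‖ = 1) (huv : ⟪u, v⟫ = 0) (t : ℝ) :
    ‖greatCircle u v t‖ = 1 := by
  simp [greatCircle, norm_smul_add_smul_of_orthonormal hu hv huv]

lemma norm_greatCircleVelocity (hu : ‖u‖ = 1) (hv : ‖v‖ = 1) (huv : ⟪u, v⟫ = 0) (t : ℝ) :
    ‖greatCircleVelocity u v t‖ = 1 := by
  simp [greatCircleVelocity, -neg_smul, norm_smul_add_smul_of_orthonormal hu hv huv]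

lemma inner_greatCircle_greatCircleVelocity (hu : ‖u‖ = 1) (hv : ‖v‖ = 1) (huv : ⟪u, v⟫ = 0)
    (t : ℝ) : ⟪greatCircle u v t, greatCircleVelocity u v t⟫ = 0 := by
  rw [greatCircle, greatCircleVelocity, inner_smul_add_smul_of_orthonormal hu hv huv]
  ring

end GreatCircles

section TensorFields

variable {E G : Type*} [NormedAddCommGroup E] [InnerProductSpace ℝ E]
  [NormedAddCommGroup G] [NormedSpace ℝ G] {F : E → E →L[ℝ] E →L[ℝ] G}

/-- The function `t ↦ F(γ(t))(γ'(t), γ'(t))` for the great circle `γ = greatCircle u v`: the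
integrand of the X-ray transform of the 2-cotensor field `F`. -/
noncomputable def tensorAlongGreatCircle (F : E → E →L[ℝ] E →L[ℝ] G) (u v : E) (t : ℝ) : G :=
  F (greatCircle u v t) (greatCircleVelocity u v t) (greatCircleVelocity u v t)

lemma continuous_tensorAlongGreatCircle (hF : ContinuousOn F (sphere 0 1)) {u v : E}
    (hu : ‖u‖ = 1) (hv : ‖v‖ = 1) (huv : ⟪u, v⟫ = 0) :
    Continuous (tensorAlongGreatCircle F u v) := by
  have position : Continuous (greatCircle u v) := by unfold greatCircle; fun_prop
  have velocity : Continuous (greatCircleVelocity u v) := by unfold greatCircleVelocity; fun_prop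
  have tensor : Continuous fun t => F (greatCircle u v t) :=
    hF.comp_continuous position fun t => mem_sphere_zero_iff_norm.2 (norm_greatCircle hu hv huv t)
  exact (tensor.clm_apply velocity).clm_apply velocity

lemma apply_neg_unit_of_integral_sin_pow_smul_eq_zero [CompleteSpace G]
    (hF : ContinuousOn F (sphere 0 1)) (k : ℕ)
    (h : ∀ u v : E, ‖u‖ = 1 → ‖v‖ = 1 → ⟪u, v⟫ = 0 →
      ∫ t in (0 : ℝ)..π, sin t ^ k • tensorAlongGreatCircle F u v t = 0)
    {u v : E} (hu : ‖u‖ = 1) (hv : ‖v‖ = 1) (huv : ⟪u, v⟫ = 0) :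
    F (-u) v v = (-1 : ℝ) ^ k • F u v v := by
  have vanishing (s : ℝ) :
      ∫ t in (0 : ℝ)..π, sin t ^ k • tensorAlongGreatCircle F u v (s + t) = 0 := by
    simpa only [tensorAlongGreatCircle, greatCircle_rebase, greatCircleVelocity_rebase] using
      h (greatCircle u v s) (greatCircleVelocity u v s) (norm_greatCircle hu hv huv s)
        (norm_greatCircleVelocity hu hv huv s) (inner_greatCircle_greatCircleVelocity hu hv huv s)
  simpa [tensorAlongGreatCircle, greatCircle, greatCircleVelocity] using
    comp_add_pi_eq_of_integral_sin_pow_smul_eq_zero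
      (continuous_tensorAlongGreatCircle hF hu hv huv) k vanishing 0

theorem parity_of_tensor_with_vanishing_weighted_xray_general [CompleteSpace G]
    (hF : ContinuousOn F (sphere 0 1)) (k : ℕ)
    (h : ∀ u v : E, ‖u‖ = 1 → ‖v‖ = 1 → ⟪u, v⟫ = 0 →
      ∫ t in (0 : ℝ)..π, sin t ^ k • tensorAlongGreatCircle F u v t = 0)
    {x V : E} (hx : ‖x‖ = 1) (hxV : ⟪x, V⟫ = 0) :
    F (-x) V V = (-1 : ℝ) ^ k • F x V V := by
  obtain rfl | hV := eq_or_ne V 0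
  · simp
  obtain ⟨c, v, hv, rfl⟩ : ∃ (c : ℝ) (v : E), ‖v‖ = 1 ∧ c • v = V :=
    ⟨‖V‖, ‖V‖⁻¹ • V, norm_smul_inv_norm hV, smul_inv_smul₀ (norm_ne_zero_iff.2 hV) V⟩
  have hxv : ⟪x, v⟫ = 0 := by
    rw [real_inner_smul_right] at hxV
    exact (mul_eq_zero.1 hxV).resolve_left (left_ne_zero_of_smul hV)
  simp only [map_smul, smul_apply,
    apply_neg_unit_of_integral_sin_pow_smul_eq_zero hF k h hx hv hxv, smul_comm _ ((-1 : ℝ) ^ k)]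

end TensorFields

/-- Part (i) of Lemma 3.2: if a smooth symmetric 2-cotensor field `F` on `ℝⁿ`
satisfies `∫₀^π F(γ(t))(γ'(t), γ'(t)) (sin t)^k dt = 0` for every unit-speed great
circle `γ` on the unit sphere, then the restriction of `F` to the sphere has the
parity of `k`. -/
theorem parity_of_tensor_with_vanishing_weighted_xray
    (n : ℕ) (hn : 2 ≤ n) (k : ℕ)
    (F : EuclideanSpace ℝ (Fin n) →
      (EuclideanSpace ℝ (Fin n) →L[ℝ] EuclideanSpace ℝ (Fin n) →L[ℝ] ℝ))
    (hF : ContDiff ℝ (⊤ : ℕ∞) F)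
    (hsymm : ∀ x V W, F x V W = F x W V)
    (h : ∀ u v : EuclideanSpace ℝ (Fin n), ‖u‖ = 1 → ‖v‖ = 1 → ⟪u, v⟫ = 0 →
      ∫ t in (0:ℝ)..π,
        F (Real.cos t • u + Real.sin t • v)
          (-Real.sin t • u + Real.cos t • v) (-Real.sin t • u + Real.cos t • v)
          * Real.sin t ^ k = 0) :
    ∀ x V : EuclideanSpace ℝ (Fin n), ‖x‖ = 1 → ⟪x, V⟫ = 0 →
      F (-x) V V = (-1 : ℝ) ^ k * F x V V :=
  fun _ _ hx hxV =>
    parity_of_tensor_with_vanishing_weighted_xray_general hF.continuous.continuousOn k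
      (by simpa only [tensorAlongGreatCircle, greatCircle, greatCircleVelocity, smul_eq_mul,
        mul_comm] using h) hx hxV
end

section
/- Let n ∈ ℕ with n ≥ 2, let k ∈ ℕ, and let F be a smooth symmetric 2-cotensor field on ℝ^n. Suppose that for every unit-speed great circle γ on the unit sphere S^{n−1} ⊂ ℝ^n one has ∫₀^π F(γ(t))(γ'(t), γ'(t))·(sin t)^k dt = 0. Then for every polynomial p in n real variables of total degree at most k, and for every unit-speed great circle γ, one has ∫₀^{2π} p(γ(t)) · F(γ(t))(γ'(t), γ'(t)) dt = 0. -/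
open Real intervalIntegral
open scoped RealInnerProductSpace

/-!
Along the great circle through an orthonormal pair the data become a continuous `2π`-periodic
function `g`. Rotating the starting point, the hypothesis reads `∫₀^π g(t + s) sinᵏ t dt = 0` for
all `s`. The Fourier coefficients of this correlation in `s` are products of a Fourier coefficient
of `g` and a moment `∫₀^π sinᵏ t e^{imt} dt`. The moments with `|m| ≤ k + 1` do not vanish, so the
corresponding Fourier coefficients of `g` do, and a polynomial of degree at most `k + 1` restricts
to a great circle as a combination of those frequencies.
-/

section TrigMonomial

/-- The trigonometric monomial `t ↦ e^{imt}` of frequency `m` on the circle of length `2π`. -/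
noncomputable def trigMonomial (m : ℤ) (t : ℝ) : ℂ :=
  Complex.exp (m * t * Complex.I)

@[fun_prop]
lemma continuous_trigMonomial (m : ℤ) : Continuous (trigMonomial m) := by
  unfold trigMonomial
  fun_prop

lemma trigMonomial_zero : trigMonomial 0 = 1 := by
  ext t
  simp [trigMonomial]

lemma trigMonomial_add (m n : ℤ) : trigMonomial (m + n) = trigMonomial m * trigMonomial n := by
  ext t
  rw [Pi.mul_apply, trigMonomial, trigMonomial, trigMonomial, ← Complex.exp_add]
  push_cast
  ring_nf

lemma trigMonomial_apply_sub (m : ℤ) (s t : ℝ) :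
    trigMonomial m (s - t) = trigMonomial m s * trigMonomial (-m) t := by
  rw [trigMonomial, trigMonomial, trigMonomial, ← Complex.exp_add]
  push_cast
  ring_nf

lemma trigMonomial_one_apply (t : ℝ) : trigMonomial 1 t = cos t + sin t * Complex.I := by
  simp [trigMonomial, Complex.exp_mul_I]

lemma trigMonomial_neg_apply (m : ℤ) (t : ℝ) :
    trigMonomial (-m) t = starRingEnd ℂ (trigMonomial m t) := by
  simp [trigMonomial, ← Complex.exp_conj]

lemma trigMonomial_neg_one_apply (t : ℝ) : trigMonomial (-1) t = cos t - sin t * Complex.I := by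
  simp only [trigMonomial_neg_apply, trigMonomial_one_apply, map_add, map_mul, Complex.conj_ofReal,
    Complex.conj_I, mul_neg, sub_eq_add_neg]

lemma trigMonomial_periodic (m : ℤ) : Function.Periodic (trigMonomial m) (2 * π) := fun t => by
  have hadd : (m : ℂ) * ((t + 2 * π : ℝ) : ℂ) * Complex.I
      = m * t * Complex.I + m * (2 * π * Complex.I) := by
    push_cast
    ring
  rw [trigMonomial, hadd]
  exact Complex.exp_periodic.int_mul m _

lemma hasDerivAt_trigMonomial (m : ℤ) (t : ℝ) :
    HasDerivAt (trigMonomial m) (m * Complex.I * trigMonomial m t) t := by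
  have hlin : HasDerivAt (fun x : ℝ => m * (x : ℂ) * Complex.I) (m * Complex.I) t := by
    simpa using ((Complex.ofRealCLM.hasDerivAt (x := t)).const_mul (m : ℂ)).mul_const Complex.I
  exact hlin.cexp.congr_deriv (mul_comm _ _)

end TrigMonomial

section SinPowMoment

/-- The moment `∫₀^π sinᵏ t e^{imt} dt`: the factor by which the `sinᵏ`-weighted half-circle
transform acts on the Fourier coefficient of frequency `-m`. -/
noncomputable def sinPowMoment (k : ℕ) (m : ℤ) : ℂ :=
  ∫ t in (0 : ℝ)..π, (sin t : ℂ) ^ k * trigMonomial m t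

lemma sinPowMoment_neg (k : ℕ) (m : ℤ) :
    sinPowMoment k (-m) = starRingEnd ℂ (sinPowMoment k m) := by
  simp only [sinPowMoment, ← intervalIntegral_conj, map_mul, map_pow, Complex.conj_ofReal,
    trigMonomial_neg_apply]

lemma hasDerivAt_sin_pow_mul_trigMonomial (k : ℕ) (m : ℤ) (t : ℝ) :
    HasDerivAt (fun t : ℝ => (sin t : ℂ) ^ (k + 1) * trigMonomial m t)
      ((k + 1) * ((sin t : ℂ) ^ k * trigMonomial (m + 1) t)
        - (k + 1 - m) * Complex.I * ((sin t : ℂ) ^ (k + 1) * trigMonomial m t)) t := by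
  refine (((hasDerivAt_sin t).ofReal_comp.pow (k + 1)).mul
    (hasDerivAt_trigMonomial m t)).congr_deriv ?_
  rw [trigMonomial_add, Pi.mul_apply, trigMonomial_one_apply, Nat.add_sub_cancel, Pi.pow_apply]
  push_cast
  ring

lemma succ_mul_sinPowMoment_add_one (k : ℕ) (m : ℤ) :
    (k + 1) * sinPowMoment k (m + 1) = (k + 1 - m) * Complex.I * sinPowMoment (k + 1) m := by
  have hftc := integral_eq_sub_of_hasDerivAt (a := 0) (b := π)
    (fun t _ => hasDerivAt_sin_pow_mul_trigMonomial k m t)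
    (Continuous.intervalIntegrable (by fun_prop) _ _)
  rw [integral_sub (Continuous.intervalIntegrable (by fun_prop) _ _)
    (Continuous.intervalIntegrable (by fun_prop) _ _), integral_const_mul,
    integral_const_mul] at hftc
  simp only [sin_pi, sin_zero, Complex.ofReal_zero, zero_pow k.succ_ne_zero, zero_mul, sub_self,
    sub_eq_zero] at hftc
  exact hftc

lemma sinPowMoment_zero_zero : sinPowMoment 0 0 = π := by
  simp [sinPowMoment, trigMonomial_zero]

lemma sinPowMoment_zero_one : sinPowMoment 0 1 = 2 * Complex.I := by
  have hexp : ∀ t : ℝ, (sin t : ℂ) ^ 0 * trigMonomial 1 t = Complex.exp (Complex.I * t) := by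
    simp [trigMonomial, mul_comm]
  simp only [sinPowMoment, hexp]
  rw [integral_exp_mul_complex Complex.I_ne_zero, mul_comm Complex.I (π : ℂ), Complex.exp_pi_mul_I,
    div_eq_iff Complex.I_ne_zero, mul_assoc, Complex.I_mul_I]
  norm_num

lemma sinPowMoment_ne_zero {k : ℕ} {m : ℤ} (hm : m.natAbs ≤ k + 1) : sinPowMoment k m ≠ 0 := by
  induction k generalizing m with
  | zero =>
    have hone : sinPowMoment 0 1 ≠ 0 := by simp [sinPowMoment_zero_one]
    obtain rfl | rfl | rfl : m = 0 ∨ m = 1 ∨ m = -1 := by omega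
    · simp [sinPowMoment_zero_zero, pi_ne_zero]
    · exact hone
    · simpa [sinPowMoment_neg] using hone
  | succ k ih =>
    -- For `m ≤ 0` the frequency `m + 1` lies in the range of `k`; conjugation covers `m > 0`.
    wlog hnonpos : m ≤ 0 generalizing m
    · have hneg := this (m := -m) (by omega) (by omega)
      rwa [sinPowMoment_neg, map_ne_zero] at hneg
    have hprod : ((k : ℂ) + 1) * sinPowMoment k (m + 1) ≠ 0 :=
      mul_ne_zero (Nat.cast_add_one_ne_zero k) (ih (by omega))
    rw [succ_mul_sinPowMoment_add_one] at hprod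
    exact right_ne_zero_of_mul hprod

end SinPowMoment

section Correlation

variable {g w : ℝ → ℂ}

lemma integral_trigMonomial_mul_comp_add (hper : Function.Periodic g (2 * π)) (m : ℤ) (t : ℝ) :
    ∫ s in (0 : ℝ)..(2 * π), trigMonomial m s * g (t + s)
      = trigMonomial (-m) t * ∫ s in (0 : ℝ)..(2 * π), trigMonomial m s * g s := by
  have hshift : ∀ s, trigMonomial m s = trigMonomial (-m) t * trigMonomial m (t + s) := fun s => by
    rw [mul_comm, ← trigMonomial_apply_sub, add_sub_cancel_left]
  have hintegrand : ∀ s, trigMonomial m s * g (t + s)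
      = trigMonomial (-m) t * (trigMonomial m (t + s) * g (t + s)) := fun s => by
    rw [hshift s, mul_assoc]
  simp only [hintegrand, integral_const_mul]
  rw [integral_comp_add_left (fun s => trigMonomial m s * g s), add_zero]
  congr 1
  simpa using ((trigMonomial_periodic m).mul hper).intervalIntegral_add_eq t 0

lemma integral_trigMonomial_mul_correlation (hg : Continuous g)
    (hper : Function.Periodic g (2 * π)) (hw : Continuous w) (a b : ℝ) (m : ℤ) :
    ∫ s in (0 : ℝ)..(2 * π), trigMonomial m s * ∫ t in a..b, g (t + s) * w t
      = (∫ t in a..b, w t * trigMonomial (-m) t)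
        * ∫ s in (0 : ℝ)..(2 * π), trigMonomial m s * g s := by
  calc ∫ s in (0 : ℝ)..(2 * π), trigMonomial m s * ∫ t in a..b, g (t + s) * w t
      = ∫ s in (0 : ℝ)..(2 * π), ∫ t in a..b, w t * (trigMonomial m s * g (t + s)) := by
        simp only [← integral_const_mul]
        congr! 4
        ring
    _ = ∫ t in a..b, ∫ s in (0 : ℝ)..(2 * π), w t * (trigMonomial m s * g (t + s)) :=
        MeasureTheory.intervalIntegral_intervalIntegral_swap
          ((ContinuousOn.integrableOn_compact (isCompact_uIcc.prod isCompact_uIcc)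
            (Continuous.continuousOn (by unfold Function.uncurry; fun_prop))).mono_set
            (Set.prod_mono Set.uIoc_subset_uIcc Set.uIoc_subset_uIcc))
    _ = ∫ t in a..b, w t * trigMonomial (-m) t
          * ∫ s in (0 : ℝ)..(2 * π), trigMonomial m s * g s := by
        simp only [integral_const_mul, integral_trigMonomial_mul_comp_add hper, mul_assoc]
    _ = _ := integral_mul_const _ _

lemma integral_trigMonomial_mul_eq_zero_of_integral_mul_sin_pow (hg : Continuous g)
    (hper : Function.Periodic g (2 * π)) {k : ℕ}
    (hhalf : ∀ s, ∫ t in (0 : ℝ)..π, g (t + s) * (sin t : ℂ) ^ k = 0)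
    {m : ℤ} (hm : m.natAbs ≤ k + 1) :
    ∫ s in (0 : ℝ)..(2 * π), trigMonomial m s * g s = 0 := by
  have hfactor := integral_trigMonomial_mul_correlation hg hper
    (w := fun t => (sin t : ℂ) ^ k) (by fun_prop) 0 π m
  simp only [hhalf, mul_zero, integral_zero] at hfactor
  exact (mul_eq_zero.1 hfactor.symm).resolve_left (sinPowMoment_ne_zero (by omega))

end Correlation

section TrigPolynomial

/-- The space of trigonometric polynomials of degree at most `d`, as functions on `ℝ`. -/
def trigPolynomial (d : ℕ) : Submodule ℂ (ℝ → ℂ) :=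
  Submodule.span ℂ (trigMonomial '' {m | m.natAbs ≤ d})

lemma trigMonomial_mem_trigPolynomial {m : ℤ} {d : ℕ} (hm : m.natAbs ≤ d) :
    trigMonomial m ∈ trigPolynomial d :=
  Submodule.subset_span ⟨m, hm, rfl⟩

lemma trigPolynomial_mono : Monotone trigPolynomial := fun _ _ hde =>
  Submodule.span_mono (Set.image_mono fun _ hm => le_trans hm hde)

-- The degrees only filter the trigonometric polynomials; `GradedMonoid` does not ask for more.
instance : SetLike.GradedMonoid trigPolynomial where
  one_mem := trigMonomial_zero ▸ trigMonomial_mem_trigPolynomial le_rfl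
  mul_mem d e f₁ f₂ hf₁ hf₂ := by
    have hmul := Submodule.mul_mem_mul hf₁ hf₂
    rw [trigPolynomial, trigPolynomial, Submodule.span_mul_span] at hmul
    refine Submodule.span_le.2 ?_ hmul
    rintro _ ⟨_, ⟨m, hm, rfl⟩, _, ⟨n, hn, rfl⟩, rfl⟩
    simp only [← trigMonomial_add]
    exact trigMonomial_mem_trigPolynomial ((m.natAbs_add_le n).trans (add_le_add hm hn))

lemma cos_mul_add_sin_mul_mem_trigPolynomial (x y : ℝ) :
    (fun t : ℝ => ((cos t * x + sin t * y : ℝ) : ℂ)) ∈ trigPolynomial 1 := by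
  have hexp : (fun t : ℝ => ((cos t * x + sin t * y : ℝ) : ℂ))
      = ((x - y * Complex.I) / 2) • trigMonomial 1
        + ((x + y * Complex.I) / 2) • trigMonomial (-1) := by
    ext t
    simp only [Pi.add_apply, Pi.smul_apply, smul_eq_mul, trigMonomial_one_apply,
      trigMonomial_neg_one_apply]
    push_cast
    linear_combination (Complex.sin t * y : ℂ) * Complex.I_sq
  rw [hexp]
  exact add_mem (Submodule.smul_mem _ _ (trigMonomial_mem_trigPolynomial le_rfl))
    (Submodule.smul_mem _ _ (trigMonomial_mem_trigPolynomial le_rfl))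

lemma eval_mem_trigPolynomial {ι : Type*} (p : MvPolynomial ι ℝ) {x : ι → ℝ → ℝ}
    (hx : ∀ i, (fun t => (x i t : ℂ)) ∈ trigPolynomial 1) :
    (fun t => ((MvPolynomial.eval (fun i => x i t) p : ℝ) : ℂ)) ∈ trigPolynomial p.totalDegree := by
  have hsum : (fun t => ((MvPolynomial.eval (fun i => x i t) p : ℝ) : ℂ))
      = ∑ d ∈ p.support, ((p.coeff d : ℝ) : ℂ) • ∏ i ∈ d.support, (fun t => (x i t : ℂ)) ^ d i := by
    ext t
    simp [MvPolynomial.eval_eq]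
  rw [hsum]
  refine sum_mem fun d hd => Submodule.smul_mem _ _ ?_
  refine trigPolynomial_mono (MvPolynomial.le_totalDegree hd) ?_
  simpa [Finsupp.sum] using
    SetLike.prod_pow_mem_graded trigPolynomial (fun _ => 1) _ d fun i (_ : i ∈ d.support) => hx i

lemma continuous_of_mem_trigPolynomial {d : ℕ} {f : ℝ → ℂ} (hf : f ∈ trigPolynomial d) :
    Continuous f := by
  induction hf using Submodule.span_induction with
  | mem f hf => obtain ⟨m, -, rfl⟩ := hf; exact continuous_trigMonomial m
  | zero => exact continuous_zero
  | add f₁ f₂ _ _ hf₁ hf₂ => exact hf₁.add hf₂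
  | smul c f _ hf => exact hf.const_smul c

lemma integral_mul_eq_zero_of_mem_trigPolynomial {g : ℝ → ℂ} (hg : Continuous g) {a b : ℝ} {d : ℕ}
    (horth : ∀ m : ℤ, m.natAbs ≤ d → ∫ t in a..b, trigMonomial m t * g t = 0)
    {f : ℝ → ℂ} (hf : f ∈ trigPolynomial d) :
    ∫ t in a..b, f t * g t = 0 := by
  induction hf using Submodule.span_induction with
  | mem f hf => obtain ⟨m, hm, rfl⟩ := hf; exact horth m hm
  | zero => simp
  | add f₁ f₂ hf₁ hf₂ h₁ h₂ =>
    have hc₁ := continuous_of_mem_trigPolynomial hf₁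
    have hc₂ := continuous_of_mem_trigPolynomial hf₂
    simp only [Pi.add_apply, add_mul]
    rw [integral_add (Continuous.intervalIntegrable (by fun_prop) _ _)
      (Continuous.intervalIntegrable (by fun_prop) _ _), h₁, h₂, add_zero]
  | smul c f _ h =>
    simp only [Pi.smul_apply, smul_eq_mul, mul_assoc, integral_const_mul, h, mul_zero]

end TrigPolynomial

lemma integral_mul_eq_zero_of_integral_mul_sin_pow_eq_zero {f g : ℝ → ℝ} (hg : Continuous g)
    (hper : Function.Periodic g (2 * π)) {k : ℕ}
    (hhalf : ∀ s, ∫ t in (0 : ℝ)..π, g (t + s) * sin t ^ k = 0)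
    (hf : (fun t => (f t : ℂ)) ∈ trigPolynomial (k + 1)) :
    ∫ t in (0 : ℝ)..(2 * π), f t * g t = 0 := by
  have hhalfC : ∀ s, ∫ t in (0 : ℝ)..π, (g (t + s) : ℂ) * (sin t : ℂ) ^ k = 0 := fun s => by
    simp only [← Complex.ofReal_pow, ← Complex.ofReal_mul, integral_ofReal, hhalf,
      Complex.ofReal_zero]
  have hC : ∫ t in (0 : ℝ)..(2 * π), (f t : ℂ) * (g t : ℂ) = 0 :=
    integral_mul_eq_zero_of_mem_trigPolynomial (g := fun t => (g t : ℂ)) (by fun_prop)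
      (fun m hm => integral_trigMonomial_mul_eq_zero_of_integral_mul_sin_pow
        (Complex.continuous_ofReal.comp hg) (hper.comp Complex.ofReal) hhalfC hm) hf
  simpa only [← Complex.ofReal_mul, integral_ofReal, Complex.ofReal_eq_zero] using hC

section GreatCircle

/-- The geodesic flow of the unit sphere: position and velocity at time `t` of the great circle
with initial position `z.1` and initial velocity `z.2`. The formula makes sense in any real vector
space; it describes great circles when `z` is an orthonormal pair. -/
noncomputable def sphereGeodesicFlow {E : Type*} [AddCommGroup E] [Module ℝ E] (t : ℝ)
    (z : E × E) : E × E :=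
  (cos t • z.1 + sin t • z.2, -sin t • z.1 + cos t • z.2)

lemma sphereGeodesicFlow_add {E : Type*} [AddCommGroup E] [Module ℝ E] (t s : ℝ) (z : E × E) :
    sphereGeodesicFlow (t + s) z = sphereGeodesicFlow t (sphereGeodesicFlow s z) := by
  ext <;> simp only [sphereGeodesicFlow, cos_add, sin_add] <;> module

lemma sphereGeodesicFlow_periodic {E : Type*} [AddCommGroup E] [Module ℝ E] (z : E × E) :
    Function.Periodic (fun t => sphereGeodesicFlow t z) (2 * π) := fun t => by
  simp [sphereGeodesicFlow]

lemma continuous_sphereGeodesicFlow {E : Type*} [AddCommGroup E] [Module ℝ E]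
    [TopologicalSpace E] [ContinuousAdd E] [ContinuousSMul ℝ E] (z : E × E) :
    Continuous fun t => sphereGeodesicFlow t z := by
  unfold sphereGeodesicFlow
  fun_prop

variable {E : Type*} [NormedAddCommGroup E] [InnerProductSpace ℝ E]

variable (E) in
/-- The unit tangent bundle of the unit sphere of `E`, as the set of pairs `(x, w)` of a point `x`
of the sphere and a unit vector `w` orthogonal to it. -/
def unitTangentBundle : Set (E × E) :=
  {z | ‖z.1‖ = 1 ∧ ‖z.2‖ = 1 ∧ ⟪z.1, z.2⟫ = 0}

lemma inner_smul_add_smul_of_mem_unitTangentBundle {z : E × E} (hz : z ∈ unitTangentBundle E)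
    (a b c d : ℝ) : ⟪a • z.1 + b • z.2, c • z.1 + d • z.2⟫ = a * c + b * d := by
  obtain ⟨hx, hw, hxw⟩ := hz
  have hxx : ⟪z.1, z.1⟫ = 1 := inner_self_eq_one_of_norm_eq_one (𝕜 := ℝ) hx
  have hww : ⟪z.2, z.2⟫ = 1 := inner_self_eq_one_of_norm_eq_one (𝕜 := ℝ) hw
  have hwx : ⟪z.2, z.1⟫ = 0 := inner_eq_zero_symm.1 hxw
  simp only [inner_add_left, inner_add_right, real_inner_smul_left, real_inner_smul_right,
    hxx, hww, hxw, hwx]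
  ring

lemma sphereGeodesicFlow_mem_unitTangentBundle (t : ℝ) {z : E × E}
    (hz : z ∈ unitTangentBundle E) : sphereGeodesicFlow t z ∈ unitTangentBundle E := by
  have hinner := inner_smul_add_smul_of_mem_unitTangentBundle hz
  refine ⟨?_, ?_, ?_⟩
  · rw [norm_eq_sqrt_real_inner, sqrt_eq_one, sphereGeodesicFlow, hinner]
    linear_combination sin_sq_add_cos_sq t
  · rw [norm_eq_sqrt_real_inner, sqrt_eq_one, sphereGeodesicFlow, hinner]
    linear_combination sin_sq_add_cos_sq t
  · rw [sphereGeodesicFlow, hinner]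
    ring

theorem polynomial_weighted_circle_integrals_vanish_general {ι : Type*} {G : E × E → ℝ}
    (hG : ContinuousOn G (unitTangentBundle E)) {k : ℕ}
    (hhalf : ∀ z ∈ unitTangentBundle E,
      ∫ t in (0 : ℝ)..π, G (sphereGeodesicFlow t z) * sin t ^ k = 0)
    (ℓ : ι → E →ₗ[ℝ] ℝ) {p : MvPolynomial ι ℝ} (hp : p.totalDegree ≤ k + 1)
    {z : E × E} (hz : z ∈ unitTangentBundle E) :
    ∫ t in (0 : ℝ)..(2 * π), MvPolynomial.eval (fun i => ℓ i (sphereGeodesicFlow t z).1) p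
      * G (sphereGeodesicFlow t z) = 0 := by
  have hmem (t : ℝ) := sphereGeodesicFlow_mem_unitTangentBundle t hz
  refine integral_mul_eq_zero_of_integral_mul_sin_pow_eq_zero (k := k)
    (hG.comp_continuous (continuous_sphereGeodesicFlow z) hmem)
    ((sphereGeodesicFlow_periodic z).comp G) (fun s => ?_)
    (trigPolynomial_mono hp (eval_mem_trigPolynomial p fun i => ?_))
  · simpa only [sphereGeodesicFlow_add] using hhalf _ (hmem s)
  · simpa [sphereGeodesicFlow] using cos_mul_add_sin_mul_mem_trigPolynomial (ℓ i z.1) (ℓ i z.2)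

end GreatCircle

/-- Part (ii) of Lemma 3.2: if the `(sin t)^k`-weighted geodesic X-ray transform of
a smooth symmetric 2-cotensor field `F` vanishes, then for every polynomial `p` of
total degree at most `k` the integrals of `p(γ(t)) F(γ(t))(γ'(t), γ'(t))` over full
great circles vanish. -/
theorem polynomial_weighted_circle_integrals_vanish
    (n : ℕ) (hn : 2 ≤ n) (k : ℕ)
    (F : EuclideanSpace ℝ (Fin n) →
      (EuclideanSpace ℝ (Fin n) →L[ℝ] EuclideanSpace ℝ (Fin n) →L[ℝ] ℝ))
    (hF : ContDiff ℝ (⊤ : ℕ∞) F)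
    (hsymm : ∀ x V W, F x V W = F x W V)
    (h : ∀ u v : EuclideanSpace ℝ (Fin n), ‖u‖ = 1 → ‖v‖ = 1 → ⟪u, v⟫ = 0 →
      ∫ t in (0:ℝ)..π,
        F (Real.cos t • u + Real.sin t • v)
          (-Real.sin t • u + Real.cos t • v) (-Real.sin t • u + Real.cos t • v)
          * Real.sin t ^ k = 0) :
    ∀ p : MvPolynomial (Fin n) ℝ, p.totalDegree ≤ k →
      ∀ u v : EuclideanSpace ℝ (Fin n), ‖u‖ = 1 → ‖v‖ = 1 → ⟪u, v⟫ = 0 →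
        ∫ t in (0:ℝ)..(2 * π),
          (MvPolynomial.eval
              (fun i => (Real.cos t • u + Real.sin t • v : EuclideanSpace ℝ (Fin n)) i) p) *
            F (Real.cos t • u + Real.sin t • v)
              (-Real.sin t • u + Real.cos t • v) (-Real.sin t • u + Real.cos t • v)
          = 0 :=
  fun _ hp u v hu hv huv =>
    polynomial_weighted_circle_integrals_vanish_general (G := fun z => F z.1 z.2 z.2)
      (Continuous.continuousOn (by have := hF.continuous; fun_prop))
      (fun z hz => h z.1 z.2 hz.1 hz.2.1 hz.2.2) (fun i => EuclideanSpace.projₗ i)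
      (Nat.le_succ_of_le hp) (z := (u, v)) ⟨hu, hv, huv⟩
end
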